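/- Let L, M, N be sharp quasi-integral commutative monoids and f : N → M, g : N → L local morphisms. Then M ⊔_N L is quasi-integral if and only if for every n ∈ N^gp with f^gp(n) ∈ M^int and -g^gp(n) ∈ L^int, one has f^gp(n) = 0 and g^gp(n) = 0. -/

import Mathlib

/-- `η : M →+ G` exhibits the abelian group `G` as the groupification of the
commutative monoid `M`. -/
def IsGroupification {M G : Type*} [AddCommMonoid M] [AddCommGroup G] (η : M →+ G) : Prop :=
  (∀ x : G, ∃ a b : M, x = η a - η b) ∧
  (∀ a b : M, η a = η b ↔ ∃ k : M, a + k = b + k)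

/-- A commutative monoid is sharp if its unit group is trivial. -/
def IsSharp (M : Type*) [AddCommMonoid M] : Prop := ∀ x : M, IsAddUnit x → x = 0

/-- A morphism of monoids is local if the preimage of the unit group is the unit group. -/
def IsLocalMonoidHom {N M : Type*} [AddCommMonoid N] [AddCommMonoid M] (f : N →+ M) : Prop :=
  ∀ n : N, IsAddUnit (f n) → IsAddUnit n

/-- `(P, iM, iL)` is the push-out `M ⊔_N L` of `f : N →+ M` and `g : N →+ L` in the
category of commutative monoids. -/
def IsMonPushout {N M L P : Type*} [AddCommMonoid N] [AddCommMonoid M] [AddCommMonoid L]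
    [AddCommMonoid P] (f : N →+ M) (g : N →+ L) (iM : M →+ P) (iL : L →+ P) : Prop :=
  iM.comp f = iL.comp g ∧
  ∀ (Q : Type*) [AddCommMonoid Q] (jM : M →+ Q) (jL : L →+ Q),
    jM.comp f = jL.comp g → ∃! h : P →+ Q, h.comp iM = jM ∧ h.comp iL = jL

/-- The saturation of a subset `P` of an abelian group `G`:
`P^sat = { x ∈ G | ∃ a ≥ 1, a • x ∈ P }`. -/
def saturationOf {G : Type*} [AddCommGroup G] (P : Set G) : Set G :=
  {x : G | ∃ a : ℕ, 0 < a ∧ a • x ∈ P}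

section Aux

/-- A totally preordered archimedean abelian group admits a real-valued state. -/
lemma arch_state {X : Type*} [AddCommGroup X] (T : AddSubmonoid X)
    (htot : ∀ x, x ∈ T ∨ -x ∈ T)
    (harch : ∀ x y : X, -y ∉ T → ∃ n : ℕ, n • y - x ∈ T) :
    ∃ t : X →+ ℝ, (∀ x ∈ T, 0 ≤ t x) ∧ ∀ u, -u ∉ T → 0 < t u := by
  classical
  let H : AddSubgroup X :=
    { carrier := {x | x ∈ T ∧ -x ∈ T}
      add_mem' := by
        rintro a b ⟨ha, ha2⟩ ⟨hb, hb2⟩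
        refine ⟨T.add_mem ha hb, ?_⟩
        rw [neg_add]
        exact T.add_mem ha2 hb2
      zero_mem' := ⟨T.zero_mem, by simp⟩
      neg_mem' := by
        rintro a ⟨ha, ha2⟩
        exact ⟨ha2, by simpa using ha⟩ }
  have key : ∀ x : X, (QuotientAddGroup.mk' H x) ∈ T.map (QuotientAddGroup.mk' H) ↔ x ∈ T := by
    intro x
    constructor
    · rintro ⟨y, hy, hxy⟩
      have h1 : -y + x ∈ H := QuotientAddGroup.eq.1 hxy
      have := T.add_mem hy h1.1
      simpa using this
    · intro hx
      exact ⟨x, hx, rfl⟩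
  let C : AddGroupCone (X ⧸ H) :=
    { T.map (QuotientAddGroup.mk' H) with
      eq_zero_of_mem_of_neg_mem' := by
        intro a
        obtain ⟨x, rfl⟩ := QuotientAddGroup.mk'_surjective H a
        intro h1 h2
        have h1' := (key x).1 h1
        have h2' := (key (-x)).1 (by simpa using h2)
        exact (QuotientAddGroup.eq_zero_iff x).2 ⟨h1', h2'⟩ }
  have hC : ∀ x : X, (QuotientAddGroup.mk' H x) ∈ C ↔ x ∈ T := key
  have : HasMemOrNegMem C := ⟨by
    intro a
    obtain ⟨x, rfl⟩ := QuotientAddGroup.mk'_surjective H a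
    rcases htot x with h | h
    · exact Or.inl ((hC x).2 h)
    · right
      rw [← map_neg]
      exact (hC _).2 h⟩
  let : LinearOrder (X ⧸ H) := LinearOrder.mkOfAddGroupCone C
  have : IsOrderedAddMonoid (X ⧸ H) := IsOrderedAddMonoid.mkOfCone C
  have hle : ∀ a b : X ⧸ H, a ≤ b ↔ b - a ∈ C := fun a b => Iff.rfl
  have : Archimedean (X ⧸ H) := ⟨by
    intro a b hb
    obtain ⟨x, rfl⟩ := QuotientAddGroup.mk'_surjective H a
    obtain ⟨y, rfl⟩ := QuotientAddGroup.mk'_surjective H b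
    have hy : -y ∉ T := by
      intro h
      apply hb.not_ge
      rw [hle, zero_sub, ← map_neg]
      exact (hC _).2 h
    obtain ⟨n, hn⟩ := harch x y hy
    refine ⟨n, ?_⟩
    rw [hle, ← map_nsmul, ← map_sub]
    exact (hC _).2 hn⟩
  obtain ⟨e, he⟩ := Archimedean.exists_orderAddMonoidHom_real_injective (X ⧸ H)
  have hpos : ∀ x ∈ T, 0 ≤ e (QuotientAddGroup.mk' H x) := by
    intro x hx
    have : (0 : X ⧸ H) ≤ QuotientAddGroup.mk' H x := by
      rw [hle, sub_zero]
      exact (hC _).2 hx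
    simpa using e.monotone' this
  refine ⟨(e : (X ⧸ H) →+ ℝ).comp (QuotientAddGroup.mk' H), hpos, ?_⟩
  intro u hu
  have huT : u ∈ T := (htot u).resolve_right hu
  refine lt_of_le_of_ne (hpos u huT) ?_
  intro h
  have h0 : QuotientAddGroup.mk' H u = 0 := he (by rw [map_zero]; exact h.symm)
  exact hu ((QuotientAddGroup.eq_zero_iff u).1 h0).2

lemma exists_state {G : Type*} [AddCommGroup G] (K : AddSubmonoid G) (u : G)
    (huK : u ∈ K) (hu : -u ∉ K) :
    ∃ t : G →+ ℝ, 0 < t u ∧ ∀ x ∈ K, (∃ n : ℕ, n • u - x ∈ K) → 0 ≤ t x := by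
  classical
  obtain ⟨T, hKT, hT⟩ := zorn_le_nonempty₀ {T : AddSubmonoid G | -u ∉ T} (by
    intro c hc hch y hy
    refine ⟨sSup c, ?_, fun z hz => le_sSup hz⟩
    intro h
    rw [AddSubmonoid.mem_sSup_of_directedOn ⟨y, hy⟩ hch.directedOn] at h
    obtain ⟨s, hs, h⟩ := h
    exact hc hs h) K hu
  have huT : u ∈ T := hKT huK
  have hnu : -u ∉ T := hT.prop
  have key : ∀ x, x ∉ T → ∃ n : ℕ, -(n • x) - u ∈ T := by
    intro x hx
    by_contra! hcon
    have : T ⊔ AddSubmonoid.multiples x ≤ T := by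
      apply hT.le_of_ge _ le_sup_left
      intro h
      obtain ⟨y, hy, z, hz, hyz⟩ := AddSubmonoid.mem_sup.1 h
      obtain ⟨n, rfl⟩ := AddSubmonoid.mem_multiples_iff _ _ |>.1 hz
      apply hcon n
      have : -(n • x) - u = y := by
        rw [sub_eq_add_neg, ← hyz]; abel
      rwa [this]
    exact hx (this ((le_sup_right : _ ≤ T ⊔ AddSubmonoid.multiples x)
      (AddSubmonoid.mem_multiples x)))
  have htot : ∀ x, x ∈ T ∨ -x ∈ T := by
    intro x
    by_contra! hcon
    obtain ⟨n, hn⟩ := key x hcon.1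
    obtain ⟨m, hm⟩ := key (-x) hcon.2
    have h1 := T.nsmul_mem hn m
    have h2 := T.nsmul_mem hm n
    have h3 := T.add_mem h1 h2
    have hm0 : n + m ≠ 0 := by
      intro h0
      have : n = 0 := by omega
      subst this
      apply hnu
      simpa using hn
    obtain ⟨k, hk⟩ := Nat.exists_eq_succ_of_ne_zero hm0
    have h4 := T.add_mem h3 (T.nsmul_mem huT k)
    apply hnu
    have hkz : (k : ℤ) = n + m - 1 := by omega
    have : m • (-(n • x) - u) + n • (-(m • -x) - u) + k • u = -u := by
      simp only [← natCast_zsmul, hkz]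
      module
    rwa [this] at h4
  let C : AddSubgroup G :=
    { carrier := {x | ∃ n : ℕ, n • u - x ∈ T ∧ n • u + x ∈ T}
      add_mem' := by
        rintro a b ⟨n, h1, h2⟩ ⟨m, h3, h4⟩
        refine ⟨n + m, ?_, ?_⟩
        · have := T.add_mem h1 h3
          convert this using 1
          rw [add_smul]; abel
        · have := T.add_mem h2 h4
          convert this using 1
          rw [add_smul]; abel
      zero_mem' := ⟨0, by simp, by simp⟩
      neg_mem' := by
        rintro a ⟨n, h1, h2⟩
        exact ⟨n, by simpa using h2, by simpa [sub_eq_add_neg] using h1⟩ }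
  obtain ⟨s, hs1, hs2⟩ := arch_state (T.comap C.subtype) (fun x => htot x) (by
    rintro ⟨x, n, hx1, hx2⟩ ⟨y, hyC⟩ hy
    have hy' : -y ∉ T := hy
    obtain ⟨m, hm⟩ := key _ hy'
    refine ⟨n * m, ?_⟩
    change (n * m) • y - x ∈ T
    have := T.add_mem (T.nsmul_mem hm n) hx1
    convert this using 1
    simp only [← natCast_zsmul]
    push_cast
    module)
  obtain ⟨t, ht⟩ := (Module.Baer.of_divisible ℝ).extension_property_addMonoidHom C.subtype
    C.subtype_injective s
  have huC : u ∈ C := ⟨1, by simp, by simpa using T.add_mem huT huT⟩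
  have ht' : ∀ x (hx : x ∈ C), t x = s ⟨x, hx⟩ := fun x hx => DFunLike.congr_fun ht ⟨x, hx⟩
  refine ⟨t, ?_, ?_⟩
  · rw [ht' u huC]
    exact hs2 _ hnu
  · rintro x hx ⟨n, hn⟩
    have hxC : x ∈ C := ⟨n, hKT hn, T.add_mem (T.nsmul_mem huT n) (hKT hx)⟩
    rw [ht' x hxC]
    exact hs1 _ (hKT hx)

/-- Face predicates. -/
structure FaceP {X : Type*} [AddCommMonoid X] (S : X → Prop) : Prop where
  zero : S 0
  add : ∀ x y, S (x + y) ↔ S x ∧ S y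

lemma face_hom {X A : Type*} [AddCommMonoid X] [AddCommMonoid A] {S : X → Prop} (hS : FaceP S)
    (χ : X → A) (h0 : χ 0 = 0) (hadd : ∀ x y, S x → S y → χ (x + y) = χ x + χ y) :
    ∃ h : X →+ WithTop A, (∀ x, S x → h x = (χ x : WithTop A)) ∧ ∀ x, ¬ S x → h x = ⊤ := by
  classical
  refine ⟨{ toFun := fun x => if S x then (χ x : WithTop A) else ⊤
            map_zero' := by simp [hS.zero, h0]
            map_add' := ?_ }, ?_, ?_⟩
  · intro x y
    by_cases hx : S x <;> by_cases hy : S y <;> simp [hS.add, hx, hy, hadd]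
  · intro x hx
    simp [hx]
  · intro x hx
    simp [hx]

variable {N M L P : Type*} [AddCommMonoid N] [AddCommMonoid M] [AddCommMonoid L]
    [AddCommMonoid P] {f : N →+ M} {g : N →+ L} {iM : M →+ P} {iL : L →+ P}

lemma po_ex (hpo : IsMonPushout f g iM iL) {Q : Type} [AddCommMonoid Q] (jM : M →+ Q)
    (jL : L →+ Q) (h : ∀ n, jM (f n) = jL (g n)) :
    ∃ k : P →+ Q, (∀ m, k (iM m) = jM m) ∧ ∀ l, k (iL l) = jL l := by
  obtain ⟨k, ⟨h1, h2⟩, -⟩ := hpo.2 (ULift Q) (AddEquiv.ulift.symm.toAddMonoidHom.comp jM)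
    (AddEquiv.ulift.symm.toAddMonoidHom.comp jL) (by
      ext n
      simp [h n])
  refine ⟨AddEquiv.ulift.toAddMonoidHom.comp k, fun m => ?_, fun l => ?_⟩
  · have := DFunLike.congr_fun h1 m
    simp only [AddMonoidHom.comp_apply] at this
    simp [this]
  · have := DFunLike.congr_fun h2 l
    simp only [AddMonoidHom.comp_apply] at this
    simp [this]

lemma po_uniq (hpo : IsMonPushout f g iM iL) {Q : Type} [AddCommMonoid Q] (k k' : P →+ Q)
    (h1 : ∀ m, k (iM m) = k' (iM m)) (h2 : ∀ l, k (iL l) = k' (iL l)) (x : P) : k x = k' x := by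
  let e : Q →+ ULift Q := AddEquiv.ulift.symm.toAddMonoidHom
  have hu := (hpo.2 (ULift Q) ((e.comp k).comp iM) ((e.comp k).comp iL) (by
    rw [AddMonoidHom.comp_assoc, hpo.1, AddMonoidHom.comp_assoc]; rfl)).unique
    (y₁ := e.comp k) (y₂ := e.comp k') ⟨rfl, rfl⟩
    ⟨by ext m; simp [h1], by ext l; simp [h2]⟩
  exact congrArg ULift.down (DFunLike.congr_fun hu x)

lemma po_mem (hpo : IsMonPushout f g iM iL) {Q : Type} [AddCommMonoid Q] (k : P →+ Q)
    (S : AddSubmonoid Q) (h1 : ∀ m, k (iM m) ∈ S) (h2 : ∀ l, k (iL l) ∈ S) (x : P) : k x ∈ S := by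
  obtain ⟨k', h3, h4⟩ := po_ex hpo ((k.comp iM).codRestrict S h1) ((k.comp iL).codRestrict S h2)
    (by
      intro n
      ext
      exact congrArg k (DFunLike.congr_fun hpo.1 n))
  have := po_uniq hpo k (S.subtype.comp k') (by intro m; simp [h3]) (by intro l; simp [h4]) x
  rw [this]
  exact (k' x).2

lemma po_face_uniq (hpo : IsMonPushout f g iM iL) {S S' : P → Prop} (hS : FaceP S)
    (hS' : FaceP S') (h1 : ∀ m, S (iM m) ↔ S' (iM m)) (h2 : ∀ l, S (iL l) ↔ S' (iL l)) (x : P) :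
    S x ↔ S' x := by
  obtain ⟨k, hk, hk2⟩ := face_hom hS (fun _ => (0 : ℕ)) rfl (by simp)
  obtain ⟨k', hk', hk2'⟩ := face_hom hS' (fun _ => (0 : ℕ)) rfl (by simp)
  have aux : ∀ y, k y = k' y ↔ (S y ↔ S' y) := by
    intro y
    by_cases h : S y <;> by_cases h' : S' y <;> simp [hk, hk2, hk', hk2', h, h']
  exact (aux x).1 (po_uniq hpo k k' (fun m => (aux _).2 (h1 m)) (fun l => (aux _).2 (h2 l)) x)

lemma po_face_ex (hpo : IsMonPushout f g iM iL) {SM : M → Prop} {SL : L → Prop} (hM : FaceP SM)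
    (hL : FaceP SL) (h : ∀ n, SM (f n) ↔ SL (g n)) :
    ∃ S : P → Prop, FaceP S ∧ (∀ m, S (iM m) ↔ SM m) ∧ ∀ l, S (iL l) ↔ SL l := by
  obtain ⟨k, hk, hk2⟩ := face_hom hM (fun _ => (0 : ℕ)) rfl (by simp)
  obtain ⟨k', hk', hk2'⟩ := face_hom hL (fun _ => (0 : ℕ)) rfl (by simp)
  obtain ⟨q, hq1, hq2⟩ := po_ex hpo k k' (by
    intro n
    by_cases h1 : SM (f n)
    · rw [hk _ h1, hk' _ ((h n).1 h1)]
    · rw [hk2 _ h1, hk2' _ (fun h2 => h1 ((h n).2 h2))])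
  refine ⟨fun x => q x ≠ ⊤, ⟨by simp, fun x y => ?_⟩, fun m => ?_, fun l => ?_⟩
  · simp [WithTop.add_eq_top]
  · simp only [hq1]
    by_cases h1 : SM m <;> simp [hk, hk2, h1]
  · simp only [hq2]
    by_cases h1 : SL l <;> simp [hk', hk2', h1]

lemma sharp_face {X : Type*} [AddCommMonoid X] (hX : IsSharp X) : FaceP (fun x : X => x = 0) := by
  refine ⟨rfl, fun x y => ⟨fun h => ?_, ?_⟩⟩
  · exact ⟨hX x ⟨⟨x, y, h, by rw [add_comm, h]⟩, rfl⟩, hX y ⟨⟨y, x, by rw [add_comm, h], h⟩, rfl⟩⟩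
  · rintro ⟨rfl, rfl⟩
    simp

lemma unit_face {X : Type*} [AddCommMonoid X] : FaceP (fun x : X => IsAddUnit x) :=
  ⟨isAddUnit_zero, fun _ _ => IsAddUnit.add_iff⟩

lemma local_zero {X Y : Type*} [AddCommMonoid X] [AddCommMonoid Y] (hX : IsSharp X)
    {f : X →+ Y} (hf : IsLocalMonoidHom f) (n : X) : f n = 0 ↔ n = 0 := by
  constructor
  · intro h
    exact hX n (hf n (by rw [h]; exact isAddUnit_zero))
  · rintro rfl
    simp

lemma po_units (hpo : IsMonPushout f g iM iL) (hNs : IsSharp N) (hMs : IsSharp M)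
    (hLs : IsSharp L) (hf : IsLocalMonoidHom f) (hg : IsLocalMonoidHom g) :
    (∀ m, IsAddUnit (iM m) → m = 0) ∧ ∀ l, IsAddUnit (iL l) → l = 0 := by
  obtain ⟨S, hS, h1, h2⟩ := po_face_ex hpo (sharp_face hMs) (sharp_face hLs) (by
    intro n
    rw [local_zero hNs hf, local_zero hNs hg])
  have hu : ∀ x, IsAddUnit x → S x := by
    rintro x ⟨w, rfl⟩
    have : S ((w : P) + (-w : AddUnits P)) := by
      rw [AddUnits.add_neg]
      exact hS.zero
    exact ((hS.add _ _).1 this).1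
  exact ⟨fun m hm => (h1 m).1 (hu _ hm), fun l hl => (h2 l).1 (hu _ hl)⟩

lemma po_unit_zero (hpo : IsMonPushout f g iM iL) (hNs : IsSharp N) (hMs : IsSharp M)
    (hLs : IsSharp L) (hf : IsLocalMonoidHom f) (hg : IsLocalMonoidHom g) (w : AddUnits P) :
    w = 0 := by
  classical
  obtain ⟨hM, hL⟩ := po_units hpo hNs hMs hLs hf hg
  apply CharacterModule.eq_zero_of_character_apply
  intro c
  have hc : ∀ a b, c (a + b) = c a + c b := map_add c
  have hc0 : c 0 = 0 := map_zero c
  obtain ⟨k, hk, hk2⟩ := face_hom (X := P) (A := AddCircle (1 : ℚ)) unit_face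
    (fun x => if h : IsAddUnit x then c h.addUnit else 0) (by
      have : (isAddUnit_zero (M := P)).addUnit = 0 := by ext; simp
      simp [this, hc0]) (by
      intro x y hx hy
      have : (hx.add hy).addUnit = hx.addUnit + hy.addUnit := by ext; simp
      simp only [hx, hy, hx.add hy, dif_pos]
      rw [this, hc])
  obtain ⟨k', hk', hk2'⟩ := face_hom (X := P) (A := AddCircle (1 : ℚ)) unit_face
    (fun x => 0) rfl (by simp)
  have := po_uniq hpo k k' (by
    intro m
    by_cases h : IsAddUnit (iM m)
    · rw [hM m h]; simp
    · rw [hk2 _ h, hk2' _ h]) (by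
    intro m
    by_cases h : IsAddUnit (iL m)
    · rw [hL m h]; simp
    · rw [hk2 _ h, hk2' _ h]) w
  have hw : IsAddUnit (w : P) := w.isAddUnit
  rw [hk _ hw, hk' _ hw, dif_pos hw] at this
  have h2 : hw.addUnit = w := by ext; simp
  rw [h2] at this
  exact_mod_cast this

end Aux

/-- Let `L, M, N` be sharp quasi-integral commutative monoids and `f : N → M`,
`g : N → L` local morphisms.  Then `M ⊔_N L` is quasi-integral if and only if for every
`n ∈ N^gp` with `f^gp n ∈ M^int` and `-(g^gp n) ∈ L^int`, one has `f^gp n = 0` and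
`g^gp n = 0`. -/
theorem stmt8 {N M L P Ngp Mgp Lgp Pgp : Type*}
    [AddCommMonoid N] [AddCommMonoid M] [AddCommMonoid L] [AddCommMonoid P]
    [AddCommGroup Ngp] [AddCommGroup Mgp] [AddCommGroup Lgp] [AddCommGroup Pgp]
    (hNs : IsSharp N) (hMs : IsSharp M) (hLs : IsSharp L)
    (f : N →+ M) (g : N →+ L) (hf : IsLocalMonoidHom f) (hg : IsLocalMonoidHom g)
    (iM : M →+ P) (iL : L →+ P) (hpo : IsMonPushout f g iM iL)
    (ηN : N →+ Ngp) (hgpN : IsGroupification ηN)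
    (ηM : M →+ Mgp) (hgpM : IsGroupification ηM)
    (ηL : L →+ Lgp) (hgpL : IsGroupification ηL)
    (ηP : P →+ Pgp) (hgpP : IsGroupification ηP)
    (hMqi : ∀ m : M, ηM m = 0 → m = 0) (hLqi : ∀ l : L, ηL l = 0 → l = 0)
    (F : Ngp →+ Mgp) (hF : F.comp ηN = ηM.comp f)
    (G' : Ngp →+ Lgp) (hG : G'.comp ηN = ηL.comp g) :
    (∀ p : P, ηP p = 0 → p = 0) ↔
      ∀ n : Ngp, F n ∈ AddMonoidHom.mrange ηM → -(G' n) ∈ AddMonoidHom.mrange ηL →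
        F n = 0 ∧ G' n = 0 := by
  have hNP : ∀ n, iM (f n) = iL (g n) := fun n => DFunLike.congr_fun hpo.1 n
  have hF' : ∀ n, F (ηN n) = ηM (f n) := fun n => DFunLike.congr_fun hF n
  have hG2 : ∀ n, G' (ηN n) = ηL (g n) := fun n => DFunLike.congr_fun hG n
  obtain ⟨hUM, hUL⟩ := po_units hpo hNs hMs hLs hf hg
  constructor
  · rintro hP n ⟨m, hm⟩ ⟨l, hl⟩
    obtain ⟨a, b, rfl⟩ := hgpN.1 n
    rw [map_sub, hF', hF'] at hm
    rw [map_sub, hG2, hG2] at hl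
    have e1 : ηM (m + f b) = ηM (f a) := by rw [map_add, hm]; abel
    have e2 : ηL (l + g a) = ηL (g b) := by rw [map_add, hl]; abel
    obtain ⟨k, hk⟩ := (hgpM.2 _ _).1 e1
    obtain ⟨k', hk'⟩ := (hgpL.2 _ _).1 e2
    have h1 := congrArg (fun x => ηP (iM x)) hk
    have h2 := congrArg (fun x => ηP (iL x)) hk'
    simp only [map_add, hNP] at h1 h2
    have h3 : iM m + iL l = 0 := by
      apply hP
      have h1' := add_right_cancel h1
      have h2' := add_right_cancel h2
      rw [map_add, eq_sub_of_add_eq h1', eq_sub_of_add_eq h2']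
      abel
    have hm0 : m = 0 := hUM m ⟨⟨iM m, iL l, h3, by rw [add_comm, h3]⟩, rfl⟩
    have hl0 : l = 0 := hUL l ⟨⟨iL l, iM m, by rw [add_comm, h3], h3⟩, rfl⟩
    subst hm0
    subst hl0
    rw [map_zero] at hm hl
    rw [map_sub, map_sub, hF', hF', hG2, hG2]
    exact ⟨hm.symm, neg_eq_zero.1 hl.symm⟩
  · intro hR
    -- the honest image of `M × L` in `P^gp` is quasi-integral
    have hqi : ∀ m l, ηP (iM m + iL l) = 0 → m = 0 ∧ l = 0 := by
      intro m l hml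
      obtain ⟨k, hk⟩ := (hgpP.2 (iM m + iL l) 0).1 (by rw [hml, map_zero])
      have hmem : (ηM m, ηL l) ∈ (F.prod (-G')).range := by
        rw [← QuotientAddGroup.eq_zero_iff]
        apply CharacterModule.eq_zero_of_character_apply
        intro c
        let q : Mgp × Lgp →+ AddCircle (1 : ℚ) :=
          AddMonoidHom.comp c (QuotientAddGroup.mk' (F.prod (-G')).range)
        have hq : ∀ n, q (F n, -G' n) = 0 := by
          intro n
          have : QuotientAddGroup.mk' (F.prod (-G')).range (F n, -G' n) = 0 :=
            (QuotientAddGroup.eq_zero_iff _).2 ⟨n, rfl⟩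
          change c (QuotientAddGroup.mk' (F.prod (-G')).range (F n, -G' n)) = 0
          rw [this]
          exact map_zero c
        obtain ⟨r, hr1, hr2⟩ := po_ex hpo
          ((q.comp (AddMonoidHom.inl Mgp Lgp)).comp ηM)
          ((q.comp (AddMonoidHom.inr Mgp Lgp)).comp ηL) (by
            intro n
            have := hq (ηN n)
            rw [hF', hG2] at this
            simp only [AddMonoidHom.comp_apply, AddMonoidHom.inl_apply, AddMonoidHom.inr_apply]
            rw [← sub_eq_zero, ← map_sub]
            simpa using this)
        have h1 := congrArg r hk
        simp only [map_add, map_zero, zero_add, add_eq_right] at h1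
        rw [hr1, hr2] at h1
        simp only [AddMonoidHom.comp_apply, AddMonoidHom.inl_apply, AddMonoidHom.inr_apply] at h1
        rw [← map_add] at h1
        have : q (ηM m, ηL l) = 0 := by simpa using h1
        exact this
      obtain ⟨n, hn⟩ := hmem
      have hn1 : F n = ηM m := congrArg Prod.fst hn
      have hn2 : -G' n = ηL l := congrArg Prod.snd hn
      obtain ⟨h1, h2⟩ := hR n ⟨m, hn1.symm⟩ ⟨l, hn2.symm⟩
      refine ⟨hMqi m (by rw [← hn1, h1]), hLqi l (by rw [← hn2, h2, neg_zero])⟩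
    intro p hp
    let Fp : P → Prop := fun x => ∃ (n : ℕ) (z : P), x + z = n • p
    have hFp : FaceP Fp := by
      refine ⟨⟨0, 0, by simp⟩, fun x y => ⟨?_, ?_⟩⟩
      · rintro ⟨n, z, h⟩
        exact ⟨⟨n, y + z, by rw [← h, add_assoc]⟩, ⟨n, x + z, by rw [← h]; abel⟩⟩
      · rintro ⟨⟨n, z, h⟩, ⟨n', z', h'⟩⟩
        exact ⟨n + n', z + z', by rw [add_smul, ← h, ← h']; abel⟩
    have hpp : Fp p := ⟨1, 0, by simp⟩
    let Fq : P → Prop := fun x => ∃ m l z, Fp (iM m + iL l) ∧ x + z = iM m + iL l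
    have hFq : FaceP Fq := by
      refine ⟨⟨0, 0, 0, by simpa using hFp.zero, by simp⟩, fun x y => ⟨?_, ?_⟩⟩
      · rintro ⟨m, l, z, h, h'⟩
        exact ⟨⟨m, l, y + z, h, by rw [← h', add_assoc]⟩,
          ⟨m, l, x + z, h, by rw [← h']; abel⟩⟩
      · rintro ⟨⟨m, l, z, h, h'⟩, ⟨m2, l2, z2, h2, h2'⟩⟩
        have e : iM (m + m2) + iL (l + l2) = (iM m + iL l) + (iM m2 + iL l2) := by
          rw [map_add, map_add]; abel
        refine ⟨m + m2, l + l2, z + z2, ?_, ?_⟩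
        · rw [e]
          exact (hFp.add _ _).2 ⟨h, h2⟩
        · rw [e, ← h', ← h2']; abel
    have hle : ∀ x, Fq x → Fp x := by
      rintro x ⟨m, l, z, h, h'⟩
      rw [← h'] at h
      exact ((hFp.add _ _).1 h).1
    obtain ⟨m0, l0, z, hFe, hz⟩ := (po_face_uniq hpo hFp hFq
      (fun m => ⟨fun h => ⟨m, 0, 0, by simpa using h, by simp⟩, hle _⟩)
      (fun l => ⟨fun h => ⟨0, l, 0, by simpa using h, by simp⟩, hle _⟩) p).1 hpp
    let K : AddSubmonoid Pgp := AddMonoidHom.mrange ((ηP.comp iM).coprod (ηP.comp iL))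
    have hKM : ∀ m, ηP (iM m) ∈ K := fun m => ⟨(m, 0), by simp⟩
    have hKL : ∀ l, ηP (iL l) ∈ K := fun l => ⟨(0, l), by simp⟩
    set u : Pgp := ηP (iM m0 + iL l0) with hu
    have huK : u ∈ K := by
      rw [hu, map_add]
      exact K.add_mem (hKM _) (hKL _)
    by_cases hnu : -u ∈ K
    · obtain ⟨⟨m1, l1⟩, h1⟩ := hnu
      have h2 : ηP (iM (m0 + m1) + iL (l0 + l1)) = 0 := by
        simp only [AddMonoidHom.coprod_apply, AddMonoidHom.comp_apply] at h1
        have : u + (ηP (iM m1) + ηP (iL l1)) = 0 := by rw [h1, add_neg_cancel]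
        rw [hu] at this
        simp only [map_add] at this ⊢
        rw [← this]; abel
      obtain ⟨h3, h4⟩ := hqi _ _ h2
      have hm0 := (((sharp_face hMs).add _ _).1 h3).1
      have hl0 := (((sharp_face hLs).add _ _).1 h4).1
      rw [hm0, hl0, map_zero, map_zero, add_zero] at hz
      have := po_unit_zero hpo hNs hMs hLs hf hg ⟨p, z, hz, by rw [add_comm, hz]⟩
      exact congrArg AddUnits.val this
    · exfalso
      obtain ⟨t, htu, htK⟩ := exists_state K u huK hnu
      have hface : ∀ {X : Type _} [AddCommMonoid X] (i : X →+ Pgp), (∀ x, i x ∈ K) →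
          FaceP (fun x => ∃ n : ℕ, n • u - i x ∈ K) := by
        intro X _ i hi
        refine ⟨⟨0, by simp⟩, fun x y => ⟨?_, ?_⟩⟩
        · rintro ⟨n, hn⟩
          refine ⟨⟨n, ?_⟩, ⟨n, ?_⟩⟩
          · convert K.add_mem hn (hi y) using 1
            rw [map_add]; abel
          · convert K.add_mem hn (hi x) using 1
            rw [map_add]; abel
        · rintro ⟨⟨n, hn⟩, ⟨n', hn'⟩⟩
          refine ⟨n + n', ?_⟩
          convert K.add_mem hn hn' using 1
          rw [map_add, add_smul]; abel
      have hface2 : ∀ {X : Type _} [AddCommMonoid X] (i : X →+ Pgp), (∀ x, i x ∈ K) →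
          FaceP (fun x => ∃ n : ℕ, n • u - i x ∈ K) := by
        intro X _ i hi
        refine ⟨⟨0, by simp⟩, fun x y => ⟨?_, ?_⟩⟩
        · rintro ⟨n, hn⟩
          refine ⟨⟨n, ?_⟩, ⟨n, ?_⟩⟩
          · convert K.add_mem hn (hi y) using 1
            rw [map_add]; abel
          · convert K.add_mem hn (hi x) using 1
            rw [map_add]; abel
        · rintro ⟨⟨n, hn⟩, ⟨n', hn'⟩⟩
          refine ⟨n + n', ?_⟩
          convert K.add_mem hn hn' using 1
          rw [map_add, add_smul]; abel
      obtain ⟨S, hS, hSM, hSL⟩ := po_face_ex hpo (hface (ηP.comp iM) hKM)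
        (hface2 (ηP.comp iL) hKL) (by
          intro n
          simp only [AddMonoidHom.comp_apply, hNP])
      have hSe : S (iM m0 + iL l0) := by
        rw [hS.add, hSM, hSL]
        refine ⟨⟨1, ?_⟩, ⟨1, ?_⟩⟩
        · convert hKL l0 using 1
          simp only [hu, map_add, one_smul, AddMonoidHom.comp_apply]; abel
        · convert hKM m0 using 1
          simp only [hu, map_add, one_smul, AddMonoidHom.comp_apply]; abel
      have hSp : S p := by
        rw [← hz] at hSe
        exact ((hS.add _ _).1 hSe).1
      have hSn : ∀ n : ℕ, S (n • p) := by
        intro n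
        induction n with
        | zero => simpa using hS.zero
        | succ n ih => rw [succ_nsmul]; exact (hS.add _ _).2 ⟨ih, hSp⟩
      have hFS : ∀ x, Fp x → S x := by
        rintro x ⟨n, y, h⟩
        have := hSn n
        rw [← h] at this
        exact ((hS.add _ _).1 this).1
      obtain ⟨k, hk, hk2⟩ := face_hom hFp (fun x => t (ηP x)) (by simp) (by simp)
      have hnn : ∀ x, k x ∈ AddSubmonoid.nonneg (WithTop ℝ) := by
        apply po_mem hpo
        · intro m
          rw [AddSubmonoid.mem_nonneg]
          by_cases h : Fp (iM m)
          · rw [hk _ h]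
            exact_mod_cast htK _ (hKM m) ((hSM m).1 (hFS _ h))
          · rw [hk2 _ h]
            exact le_top
        · intro l
          rw [AddSubmonoid.mem_nonneg]
          by_cases h : Fp (iL l)
          · rw [hk _ h]
            exact_mod_cast htK _ (hKL l) ((hSL l).1 (hFS _ h))
          · rw [hk2 _ h]
            exact le_top
      obtain ⟨n, y, hny⟩ := hFe
      have hFy : Fp y := ⟨n, iM m0 + iL l0, by rw [add_comm, hny]⟩
      have hy := hnn y
      rw [AddSubmonoid.mem_nonneg, hk _ hFy] at hy
      have hy' : 0 ≤ t (ηP y) := by exact_mod_cast hy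
      have := congrArg (fun x => t (ηP x)) hny
      simp only [map_add ηP, map_nsmul, hp, smul_zero, map_zero] at this
      rw [← map_add ηP (iM m0), ← hu, map_add] at this
      linarith
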